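/- Let R be a commutative Noetherian ring and M an R-module admitting a resolution consisting of Matlis reflexive flat modules. Then a chain complex F_• → M → 0 is a minimal flat resolution of M if and only if the Matlis dual complex 0 → M^∨ → F_•^∨ is a minimal injective resolution of M^∨. -/

import Mathlib

universe u

variable (R : Type u) [CommRing R]

/-- A morphism `f : F → M` with `F` flat is a flat precover if every morphism from a
flat module to `M` factors through `f`. -/
def IsFlatPrecover {F M : Type u} [AddCommGroup F] [AddCommGroup M] [Module R F]
    [Module R M] (f : F →ₗ[R] M) : Prop :=
  Module.Flat R F ∧
    ∀ (F' : Type u) [AddCommGroup F'] [Module R F'], Module.Flat R F' →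
      ∀ g : F' →ₗ[R] M, ∃ h : F' →ₗ[R] F, f ∘ₗ h = g

/-- A flat precover `f : F → M` is a flat cover if every `h : F → F` with `f ∘ h = f`
is an automorphism. -/
def IsFlatCover {F M : Type u} [AddCommGroup F] [AddCommGroup M] [Module R F]
    [Module R M] (f : F →ₗ[R] M) : Prop :=
  IsFlatPrecover R f ∧ ∀ h : F →ₗ[R] F, f ∘ₗ h = f → Function.Bijective h

/-- A morphism `i : M → E` is an injective envelope if `E` is injective, `i` is
injective, and the image of `i` is an essential submodule of `E`. -/
def IsInjectiveEnvelope {M E : Type u} [AddCommGroup M] [AddCommGroup E] [Module R M]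
    [Module R E] (i : M →ₗ[R] E) : Prop :=
  Module.Injective R E ∧ Function.Injective i ∧
    ∀ N : Submodule R E, N ≠ ⊥ → N ⊓ LinearMap.range i ≠ ⊥

/-- An injective cogenerator is an injective module `E` such that `Hom(N, E) ≠ 0`
for every nonzero module `N`. -/
def IsInjectiveCogenerator (E : Type u) [AddCommGroup E] [Module R E] : Prop :=
  Module.Injective R E ∧
    ∀ (N : Type u) [AddCommGroup N] [Module R N], (∃ x : N, x ≠ 0) →
      ∃ g : N →ₗ[R] E, g ≠ 0

/-- `0 → M → I⁰ → I¹ → ⋯` is a minimal injective resolution if it is an injective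
resolution in which each map from the image of a differential into the next term is an
injective envelope. -/
def IsMinimalInjectiveResolution (M : Type u) [AddCommGroup M] [Module R M]
    (I : ℕ → Type u) [∀ n, AddCommGroup (I n)] [∀ n, Module R (I n)]
    (ι : M →ₗ[R] I 0) (d : ∀ n, I n →ₗ[R] I (n + 1)) : Prop :=
  (∀ n, Module.Injective R (I n)) ∧ Function.Injective ι ∧
    LinearMap.range ι = LinearMap.ker (d 0) ∧
    (∀ n, LinearMap.range (d n) = LinearMap.ker (d (n + 1))) ∧
    IsInjectiveEnvelope R (LinearMap.range ι).subtype ∧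
    ∀ n, IsInjectiveEnvelope R (LinearMap.range (d n)).subtype

/-- `⋯ → F₁ → F₀ → M → 0` is a minimal flat resolution if it is a resolution such
that each induced map `Fᵢ → im dᵢ` is a flat cover. -/
def IsMinimalFlatResolution (M : Type u) [AddCommGroup M] [Module R M]
    (F : ℕ → Type u) [∀ n, AddCommGroup (F n)] [∀ n, Module R (F n)]
    (π : F 0 →ₗ[R] M) (d : ∀ n, F (n + 1) →ₗ[R] F n) : Prop :=
  Function.Surjective π ∧
    LinearMap.range (d 0) = LinearMap.ker π ∧
    (∀ n, LinearMap.range (d (n + 1)) = LinearMap.ker (d n)) ∧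
    IsFlatCover R π ∧
    ∀ n, IsFlatCover R (d n).rangeRestrict

/-- Given a module `D` (to be thought of as `⊕ E(R/𝔫)`, the direct sum of injective
envelopes of the residue fields of all maximal ideals, so that `Hom_R(-, D)` is the
Matlis dual), a module `M` is Matlis reflexive if the evaluation map
`M → Hom_R(Hom_R(M, D), D)` is an isomorphism. -/
def IsMatlisReflexive (D : Type u) [AddCommGroup D] [Module R D]
    (M : Type u) [AddCommGroup M] [Module R M] : Prop :=
  Function.Bijective (LinearMap.applyₗ : M →ₗ[R] ((M →ₗ[R] D) →ₗ[R] D))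

open DirectSum

/-!
Dualizing into an injective cogenerator `D` preserves and reflects exactness and exchanges flat
modules with injective ones. If `X` is flat and reflexive, it moreover identifies the endomorphisms
of `X` over a quotient `Y` with those of `X^∨` under `Y^∨`, so `X → Y` is a flat cover if and only
if `Y^∨ → X^∨` is an injective envelope. The same equivalence holds for an arbitrary `F → Y` as
soon as `Y` is a quotient of some flat reflexive `P`: each of the two conditions makes `F` embed
into `P`, hence reflexive. By induction every syzygy of a minimal flat resolution is a retract of
the corresponding syzygy of the given reflexive flat resolution, hence such a quotient.
-/

section InjectiveEnvelope

variable {R} {S E : Type u} [AddCommGroup S] [Module R S] [AddCommGroup E] [Module R E]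

theorem IsInjectiveEnvelope.injective_of_injective_comp {Z : Type*} [AddCommGroup Z]
    [Module R Z] {i : S →ₗ[R] E} (hi : IsInjectiveEnvelope R i) {k : E →ₗ[R] Z}
    (hk : Function.Injective (k ∘ₗ i)) : Function.Injective k := by
  rw [← LinearMap.ker_eq_bot]
  refine of_not_not (mt (hi.2.2 _) (not_not.2 ?_))
  rw [Submodule.eq_bot_iff]
  rintro _ ⟨hker, s, rfl⟩
  rw [(map_eq_zero_iff _ hk).1 hker, map_zero]

/-- The criterion dual to the definition of a flat cover. -/
theorem isInjectiveEnvelope_iff_forall_bijective [Module.Injective R E] {i : S →ₗ[R] E}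
    (hi : Function.Injective i) :
    IsInjectiveEnvelope R i ↔ ∀ k : E →ₗ[R] E, k ∘ₗ i = i → Function.Bijective k := by
  refine ⟨fun henv k hk => ?_, fun h => ⟨inferInstance, hi, fun N hN hdisj => hN ?_⟩⟩
  · have hkinj : Function.Injective k := henv.injective_of_injective_comp (by rwa [hk])
    obtain ⟨r, hr⟩ := Module.Injective.extension_property R E E E k hkinj LinearMap.id
    have hri : r ∘ₗ i = i := by
      conv_lhs => rw [← hk]
      rw [← LinearMap.comp_assoc, hr, LinearMap.id_comp]
    have hrinj : Function.Injective r := henv.injective_of_injective_comp (by rwa [hri])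
    exact ⟨hkinj, fun y => ⟨r y, hrinj (LinearMap.congr_fun hr (r y))⟩⟩
  · -- `S` still embeds into `E ⧸ N`, so some endomorphism `k ∘ N.mkQ` of `E` fixes `S`.
    have hinj : Function.Injective (N.mkQ ∘ₗ i) := by
      refine (injective_iff_map_eq_zero _).2 fun s hs => (map_eq_zero_iff i hi).1 ?_
      have hmem : i s ∈ N ⊓ LinearMap.range i :=
        ⟨(Submodule.Quotient.mk_eq_zero N).1 hs, LinearMap.mem_range_self i s⟩
      rwa [hdisj] at hmem
    obtain ⟨k, hk⟩ := Module.Injective.extension_property R E S (E ⧸ N) _ hinj i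
    have hbij := h (k ∘ₗ N.mkQ) hk
    rw [← N.ker_mkQ, LinearMap.ker_eq_bot]
    exact Function.Injective.of_comp hbij.1

theorem IsInjectiveEnvelope.exists_retraction {I : Type u} [AddCommGroup I] [Module R I]
    [Module.Injective R I] {i : S →ₗ[R] E} (hi : IsInjectiveEnvelope R i) {j : S →ₗ[R] I}
    (hj : Function.Injective j) :
    ∃ (α : E →ₗ[R] I) (r : I →ₗ[R] E), r ∘ₗ α = LinearMap.id := by
  have := hi.1
  obtain ⟨α, rfl⟩ := Module.Injective.extension_property R I S E i hi.2.1 j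
  have hα : Function.Injective α := hi.injective_of_injective_comp hj
  exact ⟨α, Module.Injective.extension_property R E E I α hα LinearMap.id⟩

theorem isInjectiveEnvelope_subtype_range_iff {i : S →ₗ[R] E} (hi : Function.Injective i) :
    IsInjectiveEnvelope R (LinearMap.range i).subtype ↔ IsInjectiveEnvelope R i := by
  simp only [IsInjectiveEnvelope, Submodule.range_subtype, Submodule.subtype_injective, hi]

end InjectiveEnvelope

section FlatCover

/-- `N` is a retract of `M`, i.e. isomorphic to a direct summand of `M`. This is how the syzygies of
a minimal flat resolution sit in those of any other one by flat precovers. -/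
def IsRetract (N M : Type*) [AddCommGroup N] [Module R N] [AddCommGroup M] [Module R M] : Prop :=
  ∃ (i : N →ₗ[R] M) (r : M →ₗ[R] N), r ∘ₗ i = LinearMap.id

variable {R} {P K F L : Type u} [AddCommGroup P] [Module R P] [AddCommGroup K] [Module R K]
  [AddCommGroup F] [Module R F] [AddCommGroup L] [Module R L] {p : P →ₗ[R] K} {q : F →ₗ[R] L}

theorem IsFlatCover.exists_lift_retraction (hq : IsFlatCover R q) (hp : IsFlatPrecover R p)
    {i : L →ₗ[R] K} {r : K →ₗ[R] L} (hri : r ∘ₗ i = LinearMap.id) :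
    ∃ (β : F →ₗ[R] P) (α : P →ₗ[R] F),
      α ∘ₗ β = LinearMap.id ∧ p ∘ₗ β = i ∘ₗ q ∧ q ∘ₗ α = r ∘ₗ p := by
  obtain ⟨β, hβ⟩ := hp.2 F hq.1.1 (i ∘ₗ q)
  obtain ⟨α, hα⟩ := hq.1.2 P hp.1 (r ∘ₗ p)
  have hqαβ : q ∘ₗ (α ∘ₗ β) = q := by
    rw [← LinearMap.comp_assoc, hα, LinearMap.comp_assoc, hβ, ← LinearMap.comp_assoc, hri,
      LinearMap.id_comp]
  let e : F ≃ₗ[R] F := LinearEquiv.ofBijective (α ∘ₗ β) (hq.2 _ hqαβ)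
  have hqe : q ∘ₗ e.symm.toLinearMap = q :=
    (LinearEquiv.comp_toLinearMap_symm_eq q q).2 hqαβ.symm
  refine ⟨β, e.symm ∘ₗ α, ?_, hβ, ?_⟩
  · exact LinearMap.ext e.symm_apply_apply
  · rw [← LinearMap.comp_assoc, hqe, hα]

theorem IsFlatCover.isRetract_ker (hq : IsFlatCover R q) (hp : IsFlatPrecover R p)
    (h : IsRetract R L K) : IsRetract R (LinearMap.ker q) (LinearMap.ker p) := by
  obtain ⟨i, r, hri⟩ := h
  obtain ⟨β, α, hαβ, hβ, hα⟩ := hq.exists_lift_retraction hp hri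
  have hβker : ∀ x ∈ LinearMap.ker q, β x ∈ LinearMap.ker p := fun x hx => by
    rw [LinearMap.mem_ker, ← LinearMap.comp_apply, hβ, LinearMap.comp_apply, hx, map_zero]
  have hαker : ∀ x ∈ LinearMap.ker p, α x ∈ LinearMap.ker q := fun x hx => by
    rw [LinearMap.mem_ker, ← LinearMap.comp_apply, hα, LinearMap.comp_apply, hx, map_zero]
  exact ⟨β.restrict hβker, α.restrict hαker,
    LinearMap.ext fun x => Subtype.ext (LinearMap.congr_fun hαβ x)⟩

end FlatCover

section InjectiveCogenerator

variable {R} {D : Type u} [AddCommGroup D] [Module R D]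
  {X Y Z : Type u} [AddCommGroup X] [Module R X] [AddCommGroup Y] [Module R Y]
  [AddCommGroup Z] [Module R Z]

theorem isInjectiveCogenerator_of_forall_maximal [Module.Injective R D]
    (h : ∀ 𝔪 : Ideal R, 𝔪.IsMaximal → ∃ j : R ⧸ 𝔪 →ₗ[R] D, j ≠ 0) :
    IsInjectiveCogenerator R D := by
  refine ⟨inferInstance, fun N _ _ ⟨x, hx⟩ => ?_⟩
  let A : Ideal R := LinearMap.ker (LinearMap.toSpanSingleton R N x)
  have hA : A ≠ ⊤ := by
    rw [Ne, Ideal.eq_top_iff_one, LinearMap.mem_ker, LinearMap.toSpanSingleton_apply, one_smul]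
    exact hx
  obtain ⟨𝔪, h𝔪, hA𝔪⟩ := Ideal.exists_le_maximal A hA
  obtain ⟨j, hj⟩ := h 𝔪 h𝔪
  let f : R ⧸ A →ₗ[R] N := A.liftQ (LinearMap.toSpanSingleton R N x) le_rfl
  have hf : Function.Injective f := LinearMap.ker_eq_bot.1 (Submodule.ker_liftQ_eq_bot' _ _ rfl)
  obtain ⟨g, hg⟩ :=
    Module.Injective.extension_property R D (R ⧸ A) N f hf (j ∘ₗ Submodule.factor hA𝔪)
  refine ⟨g, fun hg0 => hj ?_⟩
  rw [← LinearMap.cancel_right (Submodule.factor_surjective hA𝔪), ← hg, hg0,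
    LinearMap.zero_comp, LinearMap.zero_comp]

namespace IsInjectiveCogenerator

theorem eq_zero_of_forall_apply_eq_zero (hD : IsInjectiveCogenerator R D) {x : X}
    (hx : ∀ φ : X →ₗ[R] D, φ x = 0) : x = 0 := by
  have := hD.1
  by_contra hne
  let N : Submodule R X := R ∙ x
  obtain ⟨g, hg⟩ := hD.2 N ⟨⟨x, Submodule.mem_span_singleton_self x⟩, by simpa using hne⟩
  obtain ⟨φ, rfl⟩ := Module.Injective.extension_property R D N X N.subtype N.subtype_injective g
  refine hg (LinearMap.ext fun ⟨y, hy⟩ => ?_)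
  obtain ⟨a, rfl⟩ := Submodule.mem_span_singleton.1 hy
  simp [hx φ]

theorem mem_of_forall_apply_eq_zero (hD : IsInjectiveCogenerator R D) {N : Submodule R X} {x : X}
    (hx : ∀ φ : X →ₗ[R] D, N ≤ LinearMap.ker φ → φ x = 0) : x ∈ N := by
  rw [← Submodule.Quotient.mk_eq_zero]
  exact hD.eq_zero_of_forall_apply_eq_zero fun φ => hx (φ ∘ₗ N.mkQ) <| by
    simpa only [N.ker_mkQ] using LinearMap.ker_le_ker_comp N.mkQ φ

theorem lcomp_inj (hD : IsInjectiveCogenerator R D) {f g : X →ₗ[R] Y} :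
    LinearMap.lcomp R D f = LinearMap.lcomp R D g ↔ f = g := by
  refine ⟨fun h => LinearMap.ext fun x => sub_eq_zero.1 ?_, congrArg _⟩
  refine hD.eq_zero_of_forall_apply_eq_zero fun φ => ?_
  rw [map_sub, sub_eq_zero]
  exact LinearMap.congr_fun (LinearMap.congr_fun h φ) x

theorem injective_lcomp_iff (hD : IsInjectiveCogenerator R D) {f : X →ₗ[R] Y} :
    Function.Injective (LinearMap.lcomp R D f) ↔ Function.Surjective f := by
  refine ⟨fun h y => ?_, LinearMap.lcomp_injective_of_surjective f⟩
  refine hD.mem_of_forall_apply_eq_zero (N := LinearMap.range f) fun φ hφ => ?_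
  have hφ0 : φ = 0 := h (LinearMap.range_le_ker_iff.1 hφ)
  rw [hφ0, LinearMap.zero_apply]

theorem surjective_lcomp_iff (hD : IsInjectiveCogenerator R D) {f : X →ₗ[R] Y} :
    Function.Surjective (LinearMap.lcomp R D f) ↔ Function.Injective f := by
  have := hD.1
  refine ⟨fun h => (injective_iff_map_eq_zero f).2 fun x hx => ?_,
    fun h => Module.Injective.extension_property R D X Y f h⟩
  refine hD.eq_zero_of_forall_apply_eq_zero fun φ => ?_
  obtain ⟨ψ, rfl⟩ := h φ
  rw [LinearMap.lcomp_apply, hx, map_zero]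

theorem bijective_lcomp_iff (hD : IsInjectiveCogenerator R D) {f : X →ₗ[R] Y} :
    Function.Bijective (LinearMap.lcomp R D f) ↔ Function.Bijective f := by
  rw [Function.Bijective, hD.injective_lcomp_iff, hD.surjective_lcomp_iff, and_comm,
    Function.Bijective]

theorem exact_lcomp_iff (hD : IsInjectiveCogenerator R D) {f : X →ₗ[R] Y} {g : Y →ₗ[R] Z} :
    Function.Exact (LinearMap.lcomp R D g) (LinearMap.lcomp R D f) ↔ Function.Exact f g := by
  refine ⟨fun h => ?_, fun h => ?_⟩
  · have hgf : g ∘ₗ f = 0 := hD.lcomp_inj.1 <| h.linearMap_comp_eq_zero.trans <| by ext; simp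
    refine LinearMap.exact_of_comp_eq_zero_of_ker_le_range hgf fun y hy => ?_
    refine hD.mem_of_forall_apply_eq_zero fun φ hφ => ?_
    obtain ⟨ψ, rfl⟩ := (h φ).1 (LinearMap.range_le_ker_iff.1 hφ)
    rw [LinearMap.lcomp_apply, hy, map_zero]
  · have hrestrict : Function.Exact (LinearMap.lcomp R D g.rangeRestrict)
        (LinearMap.lcomp R D f) :=
      LinearMap.exact_lcomp_of_exact_of_surjective D
        (LinearMap.exact_iff.2 (g.ker_rangeRestrict.trans h.linearMap_ker_eq))
        g.surjective_rangeRestrict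
    have hsurj := hD.surjective_lcomp_iff.2 (LinearMap.range g).subtype_injective
    exact hsurj.comp_exact_iff_exact.2 hrestrict

theorem range_lcomp_eq_ker_lcomp_iff (hD : IsInjectiveCogenerator R D) {f : X →ₗ[R] Y}
    {g : Y →ₗ[R] Z} :
    LinearMap.range (LinearMap.lcomp R D g) = LinearMap.ker (LinearMap.lcomp R D f) ↔
      LinearMap.range f = LinearMap.ker g := by
  rw [eq_comm, ← LinearMap.exact_iff, hD.exact_lcomp_iff, LinearMap.exact_iff, eq_comm]

theorem flat_iff_injective_dual (hD : IsInjectiveCogenerator R D) :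
    Module.Flat R X ↔ Module.Injective R (X →ₗ[R] D) := by
  rw [Module.Flat.iff_rTensor_preserves_injective_linearMap, Module.injective_iff]
  refine forall₂_congr fun A B => forall₄_congr fun _ _ _ _ => forall₂_congr fun f _ => ?_
  rw [← hD.surjective_lcomp_iff]
  let curryEquiv (C : Type u) [AddCommGroup C] [Module R C] :=
    (TensorProduct.lift.equiv (RingHom.id R) C X D).symm
  refine (curryEquiv A).forall_congr fun φ => (curryEquiv B).exists_congr fun ψ => ?_
  rw [← TensorProduct.curry_injective.eq_iff, LinearMap.ext_iff]
  rfl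

theorem isInjectiveEnvelope_subtype_range_lcomp_iff (hD : IsInjectiveCogenerator R D)
    {f : X →ₗ[R] Y} :
    IsInjectiveEnvelope R (LinearMap.range (LinearMap.lcomp R D f)).subtype ↔
      IsInjectiveEnvelope R (LinearMap.lcomp R D f.rangeRestrict) := by
  have hrange : LinearMap.range (LinearMap.lcomp R D f) =
      LinearMap.range (LinearMap.lcomp R D f.rangeRestrict) :=
    LinearMap.range_comp_of_range_eq_top (LinearMap.lcomp R D f.rangeRestrict)
      (LinearMap.range_eq_top.2
        (hD.surjective_lcomp_iff.2 (LinearMap.range f).subtype_injective))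
  rw [hrange, isInjectiveEnvelope_subtype_range_iff
    (hD.injective_lcomp_iff.2 f.surjective_rangeRestrict)]

end IsInjectiveCogenerator

end InjectiveCogenerator

section Reflexive

variable {R} {D : Type u} [AddCommGroup D] [Module R D]
  {X Y : Type u} [AddCommGroup X] [Module R X] [AddCommGroup Y] [Module R Y]

namespace IsMatlisReflexive

theorem lcomp_surjective (hX : IsMatlisReflexive R D X) :
    Function.Surjective (fun f : Y →ₗ[R] X => LinearMap.lcomp R D f) := by
  intro k
  let e := LinearEquiv.ofBijective _ hX
  refine ⟨e.symm ∘ₗ k.flip, LinearMap.ext fun φ => LinearMap.ext fun y => ?_⟩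
  exact LinearMap.congr_fun (e.apply_symm_apply (k.flip y)) φ

theorem of_injective (hD : IsInjectiveCogenerator R D) (hX : IsMatlisReflexive R D X)
    {i : Y →ₗ[R] X} (hi : Function.Injective i) : IsMatlisReflexive R D Y := by
  refine ⟨(injective_iff_map_eq_zero _).2 fun y hy => ?_, fun Φ => ?_⟩
  · exact hD.eq_zero_of_forall_apply_eq_zero fun φ => LinearMap.congr_fun hy φ
  · obtain ⟨x, hx⟩ := hX.2 (Φ ∘ₗ LinearMap.lcomp R D i)
    have heval (φ : X →ₗ[R] D) : φ x = Φ (φ ∘ₗ i) := LinearMap.congr_fun hx φ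
    have hmem : x ∈ LinearMap.range i := hD.mem_of_forall_apply_eq_zero fun φ hφ => by
      rw [heval, LinearMap.range_le_ker_iff.1 hφ, map_zero]
    obtain ⟨y, rfl⟩ := hmem
    refine ⟨y, LinearMap.ext fun ψ => ?_⟩
    obtain ⟨φ, rfl⟩ := hD.surjective_lcomp_iff.2 hi ψ
    exact heval φ

theorem isFlatPrecover (hD : IsInjectiveCogenerator R D) [Module.Flat R X]
    (hX : IsMatlisReflexive R D X) {p : X →ₗ[R] Y} (hp : Function.Surjective p) :
    IsFlatPrecover R p := by
  refine ⟨inferInstance, fun F' _ _ hF' g => ?_⟩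
  have := hD.flat_iff_injective_dual.1 hF'
  obtain ⟨k, hk⟩ := Module.Injective.extension_property R _ _ _ (LinearMap.lcomp R D p)
    (hD.injective_lcomp_iff.2 hp) (LinearMap.lcomp R D g)
  obtain ⟨h, rfl⟩ := hX.lcomp_surjective k
  exact ⟨h, hD.lcomp_inj.1 hk⟩

theorem isFlatCover_iff_isInjectiveEnvelope_lcomp (hD : IsInjectiveCogenerator R D)
    [hflat : Module.Flat R X] (hX : IsMatlisReflexive R D X) {p : X →ₗ[R] Y}
    (hp : Function.Surjective p) :
    IsFlatCover R p ↔ IsInjectiveEnvelope R (LinearMap.lcomp R D p) := by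
  have := hD.flat_iff_injective_dual.1 hflat
  rw [IsFlatCover, and_iff_right (hX.isFlatPrecover hD hp),
    isInjectiveEnvelope_iff_forall_bijective (hD.injective_lcomp_iff.2 hp),
    hX.lcomp_surjective.forall]
  exact forall_congr' fun h => imp_congr hD.lcomp_inj.symm hD.bijective_lcomp_iff.symm

end IsMatlisReflexive

end Reflexive

section DirectSum

variable {R}

theorem exists_finset_sum_lof_comp_component {ι : Type*} [DecidableEq ι] {E : ι → Type*}
    [∀ i, AddCommGroup (E i)] [∀ i, Module R (E i)] {N : Type*} [AddCommGroup N] [Module R N]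
    [Module.Finite R N] (g : N →ₗ[R] ⨁ i, E i) :
    ∃ s : Finset ι, ∑ i ∈ s, lof R ι E i ∘ₗ component R ι E i ∘ₗ g = g := by
  classical
  obtain ⟨t, ht⟩ := Module.Finite.fg_top (R := R) (M := N)
  refine ⟨t.biUnion fun x => DFinsupp.support (g x), LinearMap.ext_on ht fun x hx => ?_⟩
  simp only [LinearMap.sum_apply, LinearMap.comp_apply]
  conv_rhs => rw [← DirectSum.sum_support_of (g x)]
  symm
  refine Finset.sum_subset (Finset.subset_biUnion_of_mem (fun x => DFinsupp.support (g x)) hx) ?_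
  intro i _ hi
  rw [DFinsupp.notMem_support_iff.1 hi, map_zero]

theorem injective_directSum [IsNoetherianRing R] {ι : Type*} {E : ι → Type u}
    [∀ i, AddCommGroup (E i)] [∀ i, Module R (E i)] [∀ i, Module.Injective R (E i)] :
    Module.Injective R (⨁ i, E i) := by
  classical
  refine Module.Baer.injective fun I g => ?_
  obtain ⟨s, hs⟩ := exists_finset_sum_lof_comp_component g
  choose h hh using fun i =>
    Module.Injective.extension_property R (E i) I R I.subtype I.subtype_injective
      (component R ι E i ∘ₗ g)
  have hext : (∑ i ∈ s, lof R ι E i ∘ₗ h i) ∘ₗ I.subtype = g := by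
    rw [← hs]
    ext x
    simp only [LinearMap.comp_apply, LinearMap.sum_apply, ← hh]
  exact ⟨∑ i ∈ s, lof R ι E i ∘ₗ h i, fun x hx => LinearMap.congr_fun hext ⟨x, hx⟩⟩

theorem isInjectiveCogenerator_directSum [IsNoetherianRing R] {E : MaximalSpectrum R → Type u}
    [∀ 𝔫, AddCommGroup (E 𝔫)] [∀ 𝔫, Module R (E 𝔫)] [∀ 𝔫, Module.Injective R (E 𝔫)]
    {j : ∀ 𝔫 : MaximalSpectrum R, (R ⧸ 𝔫.asIdeal) →ₗ[R] E 𝔫} (hj : ∀ 𝔫, j 𝔫 ≠ 0) :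
    IsInjectiveCogenerator R (⨁ 𝔫, E 𝔫) := by
  classical
  have := injective_directSum (R := R) (E := E)
  have hlof (𝔪 : MaximalSpectrum R) : Function.Injective (lof R _ E 𝔪) := DirectSum.of_injective 𝔪
  refine isInjectiveCogenerator_of_forall_maximal fun 𝔪 h𝔪 =>
    ⟨lof R _ E ⟨𝔪, h𝔪⟩ ∘ₗ j ⟨𝔪, h𝔪⟩, fun h0 => hj ⟨𝔪, h𝔪⟩ ?_⟩
  rwa [← LinearMap.cancel_left (hlof ⟨𝔪, h𝔪⟩), LinearMap.comp_zero]

end DirectSum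

section Resolution

/-- `⋯ → P₁ → P₀ → M → 0` is a resolution of `M` by flat modules that are reflexive with respect
to the dualizing module `D`. It need not be minimal and serves as a comparison resolution. -/
structure IsReflexiveFlatResolution (D : Type u) [AddCommGroup D] [Module R D]
    {M : Type u} [AddCommGroup M] [Module R M]
    {P : ℕ → Type u} [∀ n, AddCommGroup (P n)] [∀ n, Module R (P n)]
    (p : P 0 →ₗ[R] M) (e : ∀ n, P (n + 1) →ₗ[R] P n) : Prop where
  surjective : Function.Surjective p
  range_zero_eq_ker : LinearMap.range (e 0) = LinearMap.ker p
  range_succ_eq_ker : ∀ n, LinearMap.range (e (n + 1)) = LinearMap.ker (e n)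
  flat : ∀ n, Module.Flat R (P n)
  isMatlisReflexive : ∀ n, IsMatlisReflexive R D (P n)

variable {R} {D : Type u} [AddCommGroup D] [Module R D] {M : Type u} [AddCommGroup M] [Module R M]

theorem isFlatCover_iff_isInjectiveEnvelope_lcomp_of_surjective
    (hD : IsInjectiveCogenerator R D) {P L F : Type u} [AddCommGroup P] [Module R P]
    [AddCommGroup L] [Module R L] [AddCommGroup F] [Module R F] [hflat : Module.Flat R P]
    (hP : IsMatlisReflexive R D P) {f : P →ₗ[R] L} (hf : Function.Surjective f)
    {q : F →ₗ[R] L} :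
    IsFlatCover R q ↔ IsInjectiveEnvelope R (LinearMap.lcomp R D q) := by
  refine ⟨fun hq => ?_, fun hq => ?_⟩
  · have := hq.1.1
    obtain ⟨β, α, hαβ, _, hα⟩ :=
      hq.exists_lift_retraction (hP.isFlatPrecover hD hf) (LinearMap.id_comp LinearMap.id)
    have hβinj : Function.Injective β := LinearMap.injective_of_comp_eq_id β α hαβ
    have hqsurj : Function.Surjective q :=
      Function.Surjective.of_comp (g := α) (by rwa [← LinearMap.coe_comp, hα, LinearMap.id_comp])
    exact ((hP.of_injective hD hβinj).isFlatCover_iff_isInjectiveEnvelope_lcomp hD hqsurj).1 hq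
  · have := hD.flat_iff_injective_dual.2 hq.1
    have := hD.flat_iff_injective_dual.1 hflat
    obtain ⟨α, r, hrα⟩ := hq.exists_retraction (hD.injective_lcomp_iff.2 hf)
    obtain ⟨β, rfl⟩ := hP.lcomp_surjective r
    have hβinj : Function.Injective β :=
      hD.surjective_lcomp_iff.1 (LinearMap.surjective_of_comp_eq_id α _ hrα)
    have hqsurj : Function.Surjective q := hD.injective_lcomp_iff.1 hq.2.1
    exact ((hP.of_injective hD hβinj).isFlatCover_iff_isInjectiveEnvelope_lcomp hD hqsurj).2 hq

variable {P F : ℕ → Type u} [∀ n, AddCommGroup (P n)] [∀ n, Module R (P n)]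
  [∀ n, AddCommGroup (F n)] [∀ n, Module R (F n)] {p : P 0 →ₗ[R] M}
  {e : ∀ n, P (n + 1) →ₗ[R] P n} {q : F 0 →ₗ[R] M} {d : ∀ n, F (n + 1) →ₗ[R] F n}

namespace IsReflexiveFlatResolution

theorem isRetract_range (hD : IsInjectiveCogenerator R D)
    (hP : IsReflexiveFlatResolution R D p e)
    (hd0 : LinearMap.range (d 0) = LinearMap.ker q)
    (hd : ∀ n, LinearMap.range (d (n + 1)) = LinearMap.ker (d n)) (hq : IsFlatCover R q) (n : ℕ)
    (hcover : ∀ m < n, IsFlatCover R (d m).rangeRestrict) :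
    IsRetract R (LinearMap.range (d n)) (LinearMap.range (e n)) := by
  have := hP.flat
  induction n with
  | zero =>
    rw [hd0, hP.range_zero_eq_ker]
    exact hq.isRetract_ker ((hP.isMatlisReflexive 0).isFlatPrecover hD hP.surjective)
      ⟨LinearMap.id, LinearMap.id, LinearMap.id_comp _⟩
  | succ n ih =>
    rw [hd n, hP.range_succ_eq_ker n, ← (d n).ker_rangeRestrict, ← (e n).ker_rangeRestrict]
    exact (hcover n n.lt_succ_self).isRetract_ker
      ((hP.isMatlisReflexive (n + 1)).isFlatPrecover hD (e n).surjective_rangeRestrict)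
      (ih fun m hm => hcover m (hm.trans n.lt_succ_self))

theorem isFlatCover_iff_isInjectiveEnvelope_lcomp (hD : IsInjectiveCogenerator R D)
    (hP : IsReflexiveFlatResolution R D p e) (hd0 : LinearMap.range (d 0) = LinearMap.ker q)
    (hd : ∀ n, LinearMap.range (d (n + 1)) = LinearMap.ker (d n)) :
    (IsFlatCover R q ∧ ∀ n, IsFlatCover R (d n).rangeRestrict) ↔
      IsInjectiveEnvelope R (LinearMap.lcomp R D q) ∧
        ∀ n, IsInjectiveEnvelope R (LinearMap.lcomp R D (d n).rangeRestrict) := by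
  have := hP.flat
  rw [← isFlatCover_iff_isInjectiveEnvelope_lcomp_of_surjective hD (hP.isMatlisReflexive 0)
    hP.surjective]
  refine and_congr_right fun hq => ?_
  have hiff (n : ℕ) (hcover : ∀ m < n, IsFlatCover R (d m).rangeRestrict) :
      IsFlatCover R (d n).rangeRestrict ↔
        IsInjectiveEnvelope R (LinearMap.lcomp R D (d n).rangeRestrict) := by
    obtain ⟨i, r, hri⟩ := hP.isRetract_range hD hd0 hd hq n hcover
    exact isFlatCover_iff_isInjectiveEnvelope_lcomp_of_surjective hD
      (hP.isMatlisReflexive (n + 1)) (f := r ∘ₗ (e n).rangeRestrict)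
      ((LinearMap.surjective_of_comp_eq_id i r hri).comp (e n).surjective_rangeRestrict)
  refine ⟨fun hcover n => (hiff n fun m _ => hcover m).1 (hcover n), fun henv n => ?_⟩
  induction n using Nat.strong_induction_on with
  | h n ih => exact (hiff n ih).2 (henv n)

end IsReflexiveFlatResolution

theorem isMinimalInjectiveResolution_lcomp_iff (hD : IsInjectiveCogenerator R D) :
    IsMinimalInjectiveResolution R (M →ₗ[R] D) (fun n => F n →ₗ[R] D) (LinearMap.lcomp R D q)
        (fun n => LinearMap.lcomp R D (d n)) ↔
      Function.Surjective q ∧ LinearMap.range (d 0) = LinearMap.ker q ∧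
        (∀ n, LinearMap.range (d (n + 1)) = LinearMap.ker (d n)) ∧
        IsInjectiveEnvelope R (LinearMap.lcomp R D q) ∧
        ∀ n, IsInjectiveEnvelope R (LinearMap.lcomp R D (d n).rangeRestrict) := by
  have henvelope (hq : Function.Surjective q) :
      IsInjectiveEnvelope R (LinearMap.range (LinearMap.lcomp R D q)).subtype ↔
        IsInjectiveEnvelope R (LinearMap.lcomp R D q) :=
    isInjectiveEnvelope_subtype_range_iff (hD.injective_lcomp_iff.2 hq)
  have hinjective (hq : IsInjectiveEnvelope R (LinearMap.lcomp R D q))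
      (hd : ∀ n, IsInjectiveEnvelope R (LinearMap.lcomp R D (d n).rangeRestrict)) :
      ∀ n, Module.Injective R (F n →ₗ[R] D)
    | 0 => hq.1
    | n + 1 => (hd n).1
  rw [IsMinimalInjectiveResolution, hD.injective_lcomp_iff, hD.range_lcomp_eq_ker_lcomp_iff]
  simp_rw [hD.range_lcomp_eq_ker_lcomp_iff]
  rw [forall_congr' fun n => hD.isInjectiveEnvelope_subtype_range_lcomp_iff (f := d n)]
  exact ⟨fun ⟨_, hq, hd0, hd, hqenv, hdenv⟩ => ⟨hq, hd0, hd, (henvelope hq).1 hqenv, hdenv⟩,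
    fun ⟨hq, hd0, hd, hqenv, hdenv⟩ =>
      ⟨hinjective hqenv hdenv, hq, hd0, hd, (henvelope hq).2 hqenv, hdenv⟩⟩

theorem minimalFlatResolution_iff_matlisDual_minimalInjectiveResolution_general
    (hD : IsInjectiveCogenerator R D) (hP : IsReflexiveFlatResolution R D p e) :
    IsMinimalFlatResolution R M F q d ↔
      IsMinimalInjectiveResolution R (M →ₗ[R] D) (fun n => F n →ₗ[R] D) (LinearMap.lcomp R D q)
        (fun n => LinearMap.lcomp R D (d n)) := by
  rw [isMinimalInjectiveResolution_lcomp_iff hD]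
  exact and_congr_right fun _ => and_congr_right fun hd0 => and_congr_right fun hd =>
    hP.isFlatCover_iff_isInjectiveEnvelope_lcomp hD hd0 hd

end Resolution

/-- Over a commutative Noetherian ring, if `M` admits a resolution
consisting of Matlis reflexive flat modules, then a chain complex `F_• → M → 0` is a
minimal flat resolution of `M` iff the Matlis dual complex `0 → M^∨ → F_•^∨` is a
minimal injective resolution of `M^∨`.  Here the Matlis dualizing module `⊕ E(R/𝔫)`
is presented by a family `En 𝔫` of injective envelopes `j 𝔫 : R/𝔫 → En 𝔫` of the
residue fields of the maximal ideals `𝔫` of `R`. -/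
theorem minimalFlatResolution_iff_matlisDual_minimalInjectiveResolution [IsNoetherianRing R]
    (En : MaximalSpectrum R → Type u) [∀ 𝔫, AddCommGroup (En 𝔫)] [∀ 𝔫, Module R (En 𝔫)]
    (j : ∀ 𝔫 : MaximalSpectrum R, (R ⧸ 𝔫.asIdeal) →ₗ[R] En 𝔫)
    (hj : ∀ 𝔫, IsInjectiveEnvelope R (j 𝔫))
    {M : Type u} [AddCommGroup M] [Module R M]
    (h : ∃ (F : ℕ → Type u) (_ : ∀ n, AddCommGroup (F n)) (_ : ∀ n, Module R (F n))
        (π : F 0 →ₗ[R] M) (d : ∀ n, F (n + 1) →ₗ[R] F n),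
        Function.Surjective π ∧
          LinearMap.range (d 0) = LinearMap.ker π ∧
          (∀ n, LinearMap.range (d (n + 1)) = LinearMap.ker (d n)) ∧
          (∀ n, Module.Flat R (F n)) ∧
          ∀ n, IsMatlisReflexive R (⨁ 𝔫, En 𝔫) (F n)) :
    ∀ (F : ℕ → Type u) (_ : ∀ n, AddCommGroup (F n)) (_ : ∀ n, Module R (F n))
      (π : F 0 →ₗ[R] M) (d : ∀ n, F (n + 1) →ₗ[R] F n),
      π ∘ₗ d 0 = 0 → (∀ n, d n ∘ₗ d (n + 1) = 0) →
      (IsMinimalFlatResolution R M F π d ↔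
        IsMinimalInjectiveResolution R (M →ₗ[R] (⨁ 𝔫, En 𝔫))
          (fun n => F n →ₗ[R] (⨁ 𝔫, En 𝔫))
          (LinearMap.lcomp R (⨁ 𝔫, En 𝔫) π)
          (fun n => LinearMap.lcomp R (⨁ 𝔫, En 𝔫) (d n))) := by
  intro F _ _ π d _ _
  obtain ⟨P, _, _, p, e, hp, he0, he, hflat, hrefl⟩ := h
  have hinj (𝔫) : Module.Injective R (En 𝔫) := (hj 𝔫).1
  have hj_ne_zero (𝔫) : j 𝔫 ≠ 0 := fun hzero => by
    have : Nontrivial (R ⧸ 𝔫.asIdeal) := Ideal.Quotient.nontrivial_iff.2 𝔫.isMaximal.ne_top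
    exact one_ne_zero ((hj 𝔫).2.1 (by rw [hzero, LinearMap.zero_apply, LinearMap.zero_apply]))
  have hD : IsInjectiveCogenerator R (⨁ 𝔫, En 𝔫) := isInjectiveCogenerator_directSum hj_ne_zero
  exact minimalFlatResolution_iff_matlisDual_minimalInjectiveResolution_general hD
    ⟨hp, he0, he, hflat, hrefl⟩
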